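/- Let T be a tree on n ≥ 2 vertices. Then the spectrum of the eccentricity matrix 𝓔(T) is symmetric about the origin (for every eigenvalue λ with multiplicity k, −λ is also an eigenvalue with multiplicity k) if and only if the diameter of T is odd. -/

import Mathlib

open SimpleGraph Finset Matrix Polynomial

/-- The eccentricity of a vertex: the greatest distance from `u` to any vertex. -/
noncomputable def ecc {V : Type*} [Fintype V] (G : SimpleGraph V) (u : V) : ℕ :=
  Finset.univ.sup fun v => G.dist u v

/-- The diameter of a graph: the greatest distance between any pair of vertices. -/
noncomputable def gdiam {V : Type*} [Fintype V] (G : SimpleGraph V) : ℕ :=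
  Finset.univ.sup fun p : V × V => G.dist p.1 p.2

/-- The eccentricity matrix: `(u,v)` entry is `d(u,v)` if `d(u,v) = min (e u) (e v)`,
and `0` otherwise. -/
noncomputable def eccMatrix {V : Type*} [Fintype V] (G : SimpleGraph V) : Matrix V V ℝ :=
  Matrix.of fun u v =>
    if G.dist u v = min (ecc G u) (ecc G v) then (G.dist u v : ℝ) else 0

/-!
If the diameter is even, the middle vertex `c` of a diametral path has eccentricity half the
diameter, so the entries of the nonnegative matrix `𝓔` at the pairs formed by `c` and the two ends
of the path are positive, whence `tr (𝓔 ^ 3) > 0`. A symmetric spectrum would force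
`tr (𝓔 ^ 3) = ∑ λ ^ 3 = 0`.

If the diameter is odd, deleting the middle edge of a diametral path splits the tree into two
halves, and the vertices farthest from a given one all lie in the half opposite to it. So `𝓔`
vanishes within each half, and changing the signs of the rows and columns of one half conjugates
`𝓔` to `-𝓔`.
-/

section Spectrum

variable {n R : Type*} [Fintype n] [DecidableEq n]

/-- The eigenvalues of `A`, counted with algebraic multiplicity, are symmetric about the origin.
Only eigenvalues lying in the coefficient ring `R` are taken into account. -/
def SymmetricSpectrum [CommRing R] (A : Matrix n n R) : Prop :=
  ∀ x : R, A.charpoly.rootMultiplicity x = A.charpoly.rootMultiplicity (-x)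

lemma charpoly_neg_eq_neg_one_pow_mul_comp_neg_X [CommRing R] (A : Matrix n n R) :
    (-A).charpoly = (-1) ^ Fintype.card n * A.charpoly.comp (-X) := by
  have hcharmatrix : charmatrix (-A) = -(compRingHom (-X)).mapMatrix (charmatrix A) := by
    ext1 i j
    by_cases hij : i = j
    · subst hij
      simp [charmatrix_apply_eq, add_comm]
    · simp [charmatrix_apply_ne _ _ _ hij]
  rw [charpoly, hcharmatrix, det_neg, ← RingHom.map_det, coe_compRingHom_apply, charpoly]

lemma roots_charpoly_neg [CommRing R] [IsDomain R] (A : Matrix n n R) :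
    (-A).charpoly.roots = A.charpoly.roots.map (-·) := by
  rw [charpoly_neg_eq_neg_one_pow_mul_comp_neg_X, ← roots_comp_neg_X]
  rcases neg_one_pow_eq_or R[X] (Fintype.card n) with h | h <;> simp [h]

lemma symmetricSpectrum_iff_roots_charpoly_neg_eq [CommRing R] [IsDomain R] {A : Matrix n n R} :
    SymmetricSpectrum A ↔ (-A).charpoly.roots = A.charpoly.roots := by
  classical
  have hcount (x : R) : (-A).charpoly.roots.count x = A.charpoly.rootMultiplicity (-x) := by
    rw [roots_charpoly_neg, ← count_roots]
    simpa using Multiset.count_map_eq_count' Neg.neg A.charpoly.roots neg_injective (-x)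
  simp only [SymmetricSpectrum, Multiset.ext, hcount, count_roots]
  exact forall_congr' fun x => eq_comm

lemma symmetricSpectrum_of_bipartition [CommRing R] [IsDomain R] {A : Matrix n n R} (s : n → Prop)
    (hs : ∀ i j, (s i ↔ s j) → A i j = 0) : SymmetricSpectrum A := by
  classical
  let D : Matrix n n R := diagonal fun i => if s i then 1 else -1
  have hDD : D * D = 1 := by
    rw [diagonal_mul_diagonal, ← diagonal_one]
    congr with i
    split_ifs <;> simp
  have hconj : -A = D * (A * D) := by
    ext i j
    simp only [D, diagonal_mul, mul_diagonal, Matrix.neg_apply]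
    by_cases hi : s i <;> by_cases hj : s j <;> simp [hi, hj, hs i j]
  rw [symmetricSpectrum_iff_roots_charpoly_neg_eq, hconj, charpoly_mul_comm, Matrix.mul_assoc, hDD,
    Matrix.mul_one]

variable {𝕜 : Type*} [RCLike 𝕜]

lemma trace_pow_eq_sum_roots_charpoly_pow {A : Matrix n n 𝕜} (hA : A.IsHermitian) (k : ℕ) :
    (A ^ k).trace = (A.charpoly.roots.map (· ^ k)).sum := by
  have hpow : A ^ k = Unitary.conjStarAlgAut 𝕜 _ hA.eigenvectorUnitary
      (diagonal (RCLike.ofReal ∘ hA.eigenvalues) ^ k) := by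
    rw [map_pow, ← hA.spectral_theorem]
  rw [hpow, Unitary.conjStarAlgAut_apply, trace_mul_comm, ← Matrix.mul_assoc,
    hA.roots_charpoly_eq_eigenvalues]
  simp [diagonal_pow, trace_diagonal]

lemma SymmetricSpectrum.trace_pow_eq_zero {A : Matrix n n 𝕜} (h : SymmetricSpectrum A)
    (hA : A.IsHermitian) {k : ℕ} (hk : Odd k) : (A ^ k).trace = 0 := by
  have hneg : ((-A) ^ k).trace = (A ^ k).trace := by
    rw [trace_pow_eq_sum_roots_charpoly_pow hA, trace_pow_eq_sum_roots_charpoly_pow hA.neg,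
      symmetricSpectrum_iff_roots_charpoly_neg_eq.mp h]
  rwa [hk.neg_pow, trace_neg, neg_eq_self] at hneg

lemma trace_pow_length_pos [Ring R] [LinearOrder R] [IsStrictOrderedRing R] {A : Matrix n n R}
    (hA : ∀ i j, 0 ≤ A i j) (i : n) :
    letI := A.toQuiver
    ∀ p : Quiver.Path i i, 0 < (A ^ p.length).trace :=
  fun p => Finset.sum_pos' (fun j _ => pow_apply_nonneg hA _ j j)
    ⟨i, Finset.mem_univ i, (pow_apply_pos_iff_nonempty_path hA _ i i).mpr ⟨⟨p, rfl⟩⟩⟩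

lemma trace_pow_three_pos [Ring R] [LinearOrder R] [IsStrictOrderedRing R] {A : Matrix n n R}
    (hA : ∀ i j, 0 ≤ A i j) {i j k : n} (hij : 0 < A i j) (hjk : 0 < A j k) (hki : 0 < A k i) :
    0 < (A ^ 3).trace :=
  letI := A.toQuiver
  let eij : i ⟶ j := PLift.up hij
  let ejk : j ⟶ k := PLift.up hjk
  let eki : k ⟶ i := PLift.up hki
  trace_pow_length_pos hA i (((Quiver.Path.nil.cons eij).cons ejk).cons eki)

end Spectrum

section Between

variable {V : Type*} {G : SimpleGraph V} {a b c u v w : V}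

/-- The vertex `c` lies metrically between `u` and `v`. When `G` is connected this says that `c`
lies on a shortest path from `u` to `v`. -/
def IsBetween (G : SimpleGraph V) (u c v : V) : Prop :=
  G.dist u c + G.dist c v = G.dist u v

lemma IsBetween.symm (h : IsBetween G u c v) : IsBetween G v c u := by
  rw [IsBetween, dist_comm (u := v) (v := c), dist_comm (u := c) (v := u),
    dist_comm (u := v) (v := u), add_comm]
  exact h

lemma isBetween_of_mem_support {p : G.Walk u v} (hp : p.length = G.dist u v)
    (hc : c ∈ p.support) : IsBetween G u c v := by
  classical
  rw [IsBetween, ← hp, ← length_eq_dist_of_subwalk hp (p.isSubwalk_takeUntil hc),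
    ← length_eq_dist_of_subwalk hp (p.isSubwalk_dropUntil hc), ← Walk.length_append, p.take_spec hc]

lemma exists_isBetween_dist_eq (hG : G.Connected) {k : ℕ} (hk : k ≤ G.dist u v) :
    ∃ c, G.dist u c = k ∧ IsBetween G u c v := by
  obtain ⟨p, hp⟩ := hG.exists_walk_length_eq_dist u v
  refine ⟨p.getVert k, ?_, isBetween_of_mem_support hp (p.getVert_mem_support k)⟩
  rw [← length_eq_dist_of_subwalk hp (p.isSubwalk_take k), Walk.take_length, hp, min_eq_left hk]

lemma exists_middle_edge (hG : G.Connected) {r : ℕ} (h : G.dist u v = 2 * r + 1) :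
    ∃ a b, G.Adj a b ∧ IsBetween G a b v ∧ IsBetween G b a u ∧
      G.dist a v = r + 1 ∧ G.dist b u = r + 1 := by
  obtain ⟨a, hua, hab⟩ := exists_isBetween_dist_eq hG (show r ≤ G.dist u v by lia)
  have hav : G.dist a v = r + 1 := by rw [IsBetween] at hab; lia
  obtain ⟨b, hab_one, habv⟩ := exists_isBetween_dist_eq hG (show 1 ≤ G.dist a v by lia)
  have hub_le := hG.dist_triangle (u := u) (v := a) (w := b)
  have huv_le := hG.dist_triangle (u := u) (v := b) (w := v)
  have hub : G.dist u b = r + 1 := by have := habv; rw [IsBetween] at this; lia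
  have huab : IsBetween G u a b := by rw [IsBetween]; lia
  exact ⟨a, b, dist_eq_one_iff_adj.mp hab_one, habv, huab.symm, hav, by rw [dist_comm, hub]⟩

lemma IsBetween.mem_support (hG : G.IsTree) (h : IsBetween G u c v) (p : G.Walk u v) :
    c ∈ p.support := by
  classical
  obtain ⟨q₁, hq₁⟩ := hG.connected.exists_walk_length_eq_dist u c
  obtain ⟨q₂, hq₂⟩ := hG.connected.exists_walk_length_eq_dist c v
  have hq : (q₁.append q₂).IsPath :=
    Walk.isPath_of_length_eq_dist _ (by rw [Walk.length_append, hq₁, hq₂, h])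
  have hunique : q₁.append q₂ = p.bypass :=
    (hG.existsUnique_path u v).unique hq p.bypass_isPath
  apply p.support_bypass_subset_support
  rw [← hunique, Walk.mem_support_append_iff]
  exact Or.inl q₁.end_mem_support

lemma IsBetween.left_or_right (hG : G.IsTree) (h : IsBetween G u c v) (w : V) :
    IsBetween G u c w ∨ IsBetween G w c v := by
  obtain ⟨p, hp⟩ := hG.connected.exists_walk_length_eq_dist u w
  obtain ⟨q, hq⟩ := hG.connected.exists_walk_length_eq_dist w v
  have hc : c ∈ (p.append q).support := h.mem_support hG _
  rw [Walk.mem_support_append_iff] at hc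
  exact hc.imp (isBetween_of_mem_support hp) (isBetween_of_mem_support hq)

lemma IsBetween.trans (hG : G.IsTree) (hab : a ≠ b) (hw : IsBetween G w a b)
    (hv : IsBetween G a b v) : IsBetween G w a v := by
  refine (hw.left_or_right hG v).resolve_right fun hvab => ?_
  have hpos := hG.connected.pos_dist_of_ne hab
  have hbav : G.dist b v + G.dist a b = G.dist a v := by rw [add_comm]; exact hv
  have hvab' := hvab.symm
  rw [IsBetween, dist_comm (u := b) (v := a)] at hvab'
  lia

lemma isBetween_of_adj_of_not_isBetween (hG : G.IsTree) (hab : G.Adj a b)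
    (h : ¬ IsBetween G w a b) : IsBetween G w b a := by
  have hab_one : G.dist a b = 1 := dist_eq_one_iff_adj.mpr hab
  have hba_one : G.dist b a = 1 := dist_eq_one_iff_adj.mpr hab.symm
  rw [IsBetween, hab_one, eq_comm] at h
  rw [IsBetween, hba_one, eq_comm]
  exact (hG.dist_eq_dist_add_one_of_adj w hab).resolve_right h

end Between

section Eccentricity

variable {V : Type*} [Fintype V] {G : SimpleGraph V} {a b c u v w w' : V}

lemma dist_le_ecc (G : SimpleGraph V) (u v : V) : G.dist u v ≤ ecc G u :=
  Finset.le_sup (f := fun v => G.dist u v) (Finset.mem_univ v)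

lemma dist_le_gdiam (G : SimpleGraph V) (u v : V) : G.dist u v ≤ gdiam G :=
  Finset.le_sup (f := fun p : V × V => G.dist p.1 p.2) (Finset.mem_univ (u, v))

lemma exists_dist_eq_gdiam [Nonempty V] (G : SimpleGraph V) : ∃ u v, G.dist u v = gdiam G := by
  obtain ⟨p, -, hp⟩ := Finset.exists_mem_eq_sup (Finset.univ : Finset (V × V))
    Finset.univ_nonempty fun p => G.dist p.1 p.2
  exact ⟨p.1, p.2, hp.symm⟩

lemma ecc_eq_gdiam_of_dist_eq_gdiam (h : G.dist u v = gdiam G) : ecc G u = gdiam G :=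
  le_antisymm (Finset.sup_le fun w _ => dist_le_gdiam G u w) (h ▸ dist_le_ecc G u v)

lemma gdiam_pos [Nontrivial V] (hG : G.Connected) : 0 < gdiam G := by
  obtain ⟨u, v, huv⟩ := exists_pair_ne V
  exact (hG.pos_dist_of_ne huv).trans_le (dist_le_gdiam G u v)

lemma IsBetween.ecc_eq_max (hG : G.IsTree) (huv : G.dist u v = gdiam G)
    (hc : IsBetween G u c v) : ecc G c = max (G.dist u c) (G.dist c v) := by
  apply le_antisymm
  · refine Finset.sup_le fun w _ => ?_
    have huw := dist_le_gdiam G u w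
    have hwv := dist_le_gdiam G w v
    have hwc : G.dist w c = G.dist c w := dist_comm
    rcases hc.left_or_right hG w with h | h <;> unfold IsBetween at h hc <;> lia
  · exact max_le (dist_comm.trans_le (dist_le_ecc G c u)) (dist_le_ecc G c v)

lemma dist_lt_ecc_of_isBetween (hG : G.IsTree) (hab : a ≠ b) (habv : IsBetween G a b v)
    (hdiam : gdiam G < 2 * G.dist a v) (hw : IsBetween G w a b) (hw' : IsBetween G w' a b) :
    G.dist w w' < ecc G w := by
  have hwv : G.dist w a + G.dist a v = G.dist w v := hw.trans hG hab habv
  have hwv' : G.dist w' a + G.dist a v = G.dist w' v := hw'.trans hG hab habv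
  have hw'a : G.dist a w' < G.dist a v := by
    have := dist_le_gdiam G w' v
    rw [dist_comm]
    lia
  calc G.dist w w' ≤ G.dist w a + G.dist a w' := hG.connected.dist_triangle
    _ < G.dist w a + G.dist a v := by gcongr
    _ = G.dist w v := hwv
    _ ≤ ecc G w := dist_le_ecc G w v

end Eccentricity

section EccMatrix

variable {V : Type*} [Fintype V] {G : SimpleGraph V} {u v : V}

lemma eccMatrix_apply (G : SimpleGraph V) (u v : V) :
    eccMatrix G u v =
      if G.dist u v = ecc G u ∨ G.dist u v = ecc G v then (G.dist u v : ℝ) else 0 := by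
  have hu := dist_le_ecc G u v
  have hv : G.dist u v ≤ ecc G v := dist_comm.trans_le (dist_le_ecc G v u)
  rw [eccMatrix, of_apply]
  congr 1
  rw [eq_iff_iff]
  lia

lemma eccMatrix_apply_pos (hdist : 0 < G.dist u v)
    (h : G.dist u v = ecc G u ∨ G.dist u v = ecc G v) : 0 < eccMatrix G u v := by
  rw [eccMatrix_apply, if_pos h]
  exact_mod_cast hdist

lemma eccMatrix_apply_nonneg (G : SimpleGraph V) (u v : V) : 0 ≤ eccMatrix G u v := by
  rw [eccMatrix_apply]
  positivity

lemma isHermitian_eccMatrix (G : SimpleGraph V) : (eccMatrix G).IsHermitian := by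
  ext u v
  simp [eccMatrix, dist_comm, min_comm]

lemma trace_eccMatrix_pow_three_pos [DecidableEq V] [Nontrivial V] (hG : G.IsTree)
    (hdiam : Even (gdiam G)) : 0 < (eccMatrix G ^ 3).trace := by
  obtain ⟨r, hr⟩ := hdiam
  have hpos : 0 < gdiam G := gdiam_pos hG.connected
  obtain ⟨u, v, huv⟩ := exists_dist_eq_gdiam G
  obtain ⟨c, huc, hc⟩ := exists_isBetween_dist_eq hG.connected (show r ≤ G.dist u v by lia)
  have hcv : G.dist c v = r := by rw [IsBetween] at hc; lia
  have hecc : ecc G c = r := by rw [hc.ecc_eq_max hG huv, huc, hcv, max_self]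
  exact trace_pow_three_pos (eccMatrix_apply_nonneg G)
    (eccMatrix_apply_pos (u := u) (v := c) (by lia) (.inr (huc.trans hecc.symm)))
    (eccMatrix_apply_pos (v := v) (by lia) (.inl (hcv.trans hecc.symm)))
    (eccMatrix_apply_pos (by rw [dist_comm]; lia)
      (.inr (by rw [dist_comm, huv, ecc_eq_gdiam_of_dist_eq_gdiam huv])))

lemma exists_bipartition_eccMatrix (hG : G.IsTree) (hdiam : Odd (gdiam G)) :
    ∃ s : V → Prop, ∀ u v, (s u ↔ s v) → eccMatrix G u v = 0 := by
  obtain ⟨r, hr⟩ := hdiam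
  have := hG.connected.nonempty
  obtain ⟨x, y, hxy⟩ := exists_dist_eq_gdiam G
  obtain ⟨a, b, hab, haby, hbax, hay, hbx⟩ := exists_middle_edge hG.connected (hxy.trans hr)
  have dist_lt_ecc (u v : V) (huv : IsBetween G u a b ↔ IsBetween G v a b) :
      G.dist u v < ecc G u := by
    by_cases hu : IsBetween G u a b
    · exact dist_lt_ecc_of_isBetween hG hab.ne haby (by lia) hu (huv.mp hu)
    · exact dist_lt_ecc_of_isBetween hG hab.ne' hbax (by lia)
        (isBetween_of_adj_of_not_isBetween hG hab hu)
        (isBetween_of_adj_of_not_isBetween hG hab (mt huv.mpr hu))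
  refine ⟨fun w => IsBetween G w a b, fun u v huv => ?_⟩
  have hu : G.dist u v < ecc G u := dist_lt_ecc u v huv
  have hv : G.dist u v < ecc G v := dist_comm.trans_lt (dist_lt_ecc v u huv.symm)
  rw [eccMatrix_apply, if_neg (not_or.mpr ⟨hu.ne, hv.ne⟩)]

end EccMatrix

/-- The spectrum of the eccentricity matrix of a tree on `n ≥ 2` vertices is symmetric about
the origin if and only if the diameter of the tree is odd. -/
theorem stmt12 {V : Type*} [Fintype V] [DecidableEq V] (T : SimpleGraph V)
    (hT : T.IsTree) (hn : 2 ≤ Fintype.card V) :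
    (∀ x : ℝ, (eccMatrix T).charpoly.rootMultiplicity x
        = (eccMatrix T).charpoly.rootMultiplicity (-x)) ↔ Odd (gdiam T) := by
  have : Nontrivial V := Fintype.one_lt_card_iff_nontrivial.mp hn
  change SymmetricSpectrum (eccMatrix T) ↔ Odd (gdiam T)
  refine ⟨fun hsymm => ?_, fun hodd => ?_⟩
  · by_contra heven
    have hpos := trace_eccMatrix_pow_three_pos hT (Nat.not_odd_iff_even.mp heven)
    exact hpos.ne' (hsymm.trace_pow_eq_zero (isHermitian_eccMatrix T) (by decide))
  · obtain ⟨s, hs⟩ := exists_bipartition_eccMatrix hT hodd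
    exact symmetricSpectrum_of_bipartition s hs
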